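/- Fix 0 < η < 1/2. There exists a constant C = C(η) > 0 such that the following holds. Let n₁, n₂ be positive integers, let B ∈ ℝ^{n₁×n₂}, let E ⊆ {1,…,n₁} with |E| ≥ n₁(1 − η/3), let d be an integer with 1 ≤ d ≤ |E|/2, and fix a 0/1 vector z indexed by {1,…,n₁}∖E. Let x ∈ {0,1}^{n₁} be random, with its restriction to E uniformly distributed over 0/1 vectors with exactly d ones, and its restriction to the complement of E equal to z. Let B′ be the n₁ × (n₂+1) matrix obtained from B by appending x as a new column. If the transpose Bᵀ has a kernel vector in ℝ^{n₁} which is η-balanced, then Pr[rank B′ ≥ rank B + 1] ≥ 1 − C/√d. -/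

import Mathlib

open scoped Classical
open Finset

/-- A vector is `η`-balanced if all of its level sets have size at most `(1−η)·n`. -/
def IsBalancedVec (η : ℝ) {n : ℕ} (v : Fin n → ℝ) : Prop :=
  ∀ a : ℝ, ({i | v i = a}.ncard : ℝ) ≤ (1 - η) * n

/-- The random 0/1 vector determined by the set `T ⊆ E` of coordinates of `E` equal
to 1, with the coordinates outside `E` given by `z`. -/
def xVec {n : ℕ} (E T : Finset (Fin n)) (z : Fin n → ℝ) : Fin n → ℝ :=
  fun i => if i ∈ T then 1 else if i ∈ E then 0 else z i

/-- The matrix `B` with the column `x` appended. -/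
noncomputable def appendCol {n₁ n₂ : ℕ} (B : Matrix (Fin n₁) (Fin n₂) ℝ)
    (x : Fin n₁ → ℝ) : Matrix (Fin n₁) (Option (Fin n₂)) ℝ :=
  Matrix.of fun i j => j.elim (x i) fun k => B i k

/-!
A column `x` with `v ⬝ᵥ x ≠ 0` for a left kernel vector `v` of `B` lies outside the column space, so
it remains to bound the number of `d`-subsets `T` of `E` with a prescribed value of `∑ i ∈ T, v i`.
Since `v` is balanced, a threshold `t` splits `E` into a low part `L` (`v ≤ t`) and a high part `H`
(`t < v`), each a positive proportion of `E`. Choose random orders of `L` and `H`, and consider the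
`d`-sets made of a prefix of each: trading a low element for a high one strictly increases the sum,
so at most one of these sets has the prescribed sum. Averaging over the orders, as in the proof of
the LYM inequality, bounds the count by the largest of the numbers `|L|.choose (d - i) *
|H|.choose i`. These are hypergeometric weights of total `|E|.choose d`; the first order of `√d` of
them after the mode are all at least half of the maximum, so the maximum is `O(|E|.choose d / √d)`.
-/

section Rank

open scoped Matrix

variable {K m n n' : Type*} [Field K] [Fintype m] [Fintype n] [Fintype n']

lemma rank_lt_rank_of_vecMul {A : Matrix m n K} {A' : Matrix m n' K}
    (hcol : Set.range A.col ⊆ Set.range A'.col) {v : m → K}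
    (hv : v ᵥ* A = 0) (hv' : v ᵥ* A' ≠ 0) : A.rank < A'.rank := by
  refine Submodule.finrank_lt_finrank_of_lt (lt_of_le_of_ne ?_ fun heq => hv' ?_)
  · simpa only [Matrix.range_mulVecLin] using Submodule.span_mono hcol
  · funext j
    obtain ⟨w, hw⟩ : A'.col j ∈ A.mulVecLin.range := by
      rw [heq, Matrix.range_mulVecLin]
      exact Submodule.subset_span ⟨j, rfl⟩
    calc (v ᵥ* A') j = v ⬝ᵥ A *ᵥ w := congrArg (v ⬝ᵥ ·) hw.symm
      _ = 0 := by rw [Matrix.dotProduct_mulVec, hv, zero_dotProduct]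

lemma rank_lt_rank_appendCol {n₁ n₂ : ℕ} {B : Matrix (Fin n₁) (Fin n₂) ℝ} {x v : Fin n₁ → ℝ}
    (hv : v ᵥ* B = 0) (hx : v ⬝ᵥ x ≠ 0) : B.rank < (appendCol B x).rank :=
  rank_lt_rank_of_vecMul (by rintro _ ⟨k, rfl⟩; exact ⟨some k, rfl⟩) hv
    fun h => hx (congrFun h none)

lemma dotProduct_xVec {n : ℕ} {E T : Finset (Fin n)} (hT : T ⊆ E) (v z : Fin n → ℝ) :
    v ⬝ᵥ xVec E T z = ∑ i ∈ T, v i + ∑ i ∈ Eᶜ, v i * z i := by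
  have hsummand (i : Fin n) :
      v i * xVec E T z i = (if i ∈ T then v i else 0) + if i ∈ Eᶜ then v i * z i else 0 := by
    have := @hT i
    by_cases i ∈ T <;> by_cases i ∈ E <;> simp_all [xVec]
  simp_rw [dotProduct, hsummand, sum_add_distrib, sum_ite_mem, univ_inter]

lemma rank_lt_rank_appendCol_xVec {n₁ n₂ : ℕ} {B : Matrix (Fin n₁) (Fin n₂) ℝ}
    {E T : Finset (Fin n₁)} (hT : T ⊆ E) {v z : Fin n₁ → ℝ} (hv : v ᵥ* B = 0)
    (hne : ∑ i ∈ T, v i ≠ -∑ i ∈ Eᶜ, v i * z i) : B.rank < (appendCol B (xVec E T z)).rank := by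
  refine rank_lt_rank_appendCol hv ?_
  rw [dotProduct_xVec hT]
  exact fun hzero => hne (eq_neg_of_add_eq_zero_left hzero)

end Rank

section LYM

/-- Two prefixes of one numbering are nested, so a numbering of `α` and a numbering of `β` have
`A i` and `B i` as prefixes for at most one `i ∈ F`. -/
lemma sum_inv_choose_mul_inv_choose_le_one {ι α β : Type*} [Fintype α] [Fintype β] {F : Finset ι}
    {A : ι → Finset α} {B : ι → Finset β}
    (hF : (F : Set ι).Pairwise fun i j =>
      IncompRel (· ⊆ ·) (A i) (A j) ∨ IncompRel (· ⊆ ·) (B i) (B j)) :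
    ∑ i ∈ F, ((Fintype.card α).choose #(A i) : ℚ≥0)⁻¹ * ((Fintype.card β).choose #(B i) : ℚ≥0)⁻¹
      ≤ 1 := by
  have hdisj : (F : Set ι).PairwiseDisjoint
      fun i => Numbering.prefixed (A i) ×ˢ Numbering.prefixed (B i) := fun i hi j hj hij =>
    disjoint_product.2 <| (hF hi hj hij).imp
      (fun h => Numbering.disjoint_prefixed_prefixed h.1 h.2)
      (fun h => Numbering.disjoint_prefixed_prefixed h.1 h.2)
  calc _ = ∑ i ∈ F, (Numbering.prefixed (A i) ×ˢ Numbering.prefixed (B i)).dens :=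
        sum_congr rfl fun _ _ => by
          rw [← Numbering.dens_prefixed, ← Numbering.dens_prefixed]
          simp only [dens, card_product, Fintype.card_prod, Nat.cast_mul, mul_div_mul_comm]
    _ ≤ 1 := (dens_biUnion hdisj).symm.trans_le dens_le_one

variable {ι M : Type*} [AddCommMonoid M] [LinearOrder M] [IsOrderedCancelAddMonoid M]
  {v : ι → M} {t : M}

lemma sum_lt_sum_of_sdiff_le_of_lt_sdiff {S T : Finset ι} (hcard : #S = #T) (hne : S ≠ T)
    (hS : ∀ i ∈ S \ T, v i ≤ t) (hT : ∀ i ∈ T \ S, t < v i) : ∑ i ∈ S, v i < ∑ i ∈ T, v i := by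
  have hTS : (T \ S).Nonempty :=
    sdiff_nonempty.2 fun h => hne (eq_of_subset_of_card_le h hcard.le).symm
  rw [← sum_sdiff_lt_sum_sdiff]
  calc ∑ i ∈ S \ T, v i ≤ #(S \ T) • t := sum_le_card_nsmul _ _ _ hS
    _ = ∑ _ ∈ T \ S, t := by rw [card_sdiff_comm hcard, sum_const]
    _ < ∑ i ∈ T \ S, v i := sum_lt_sum_of_nonempty hTS hT

variable {L H : Finset ι}

lemma sdiff_subset_of_subtype_subset {P Q : Finset ι} (hP : P ⊆ L ∪ H)
    (h : P.subtype (· ∈ L) ⊆ Q.subtype (· ∈ L)) : P \ Q ⊆ H := by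
  intro i hi
  obtain ⟨hiP, hiQ⟩ := mem_sdiff.1 hi
  refine (mem_union.1 (hP hiP)).resolve_left fun hiL => hiQ ?_
  exact mem_subtype.1 (h (x := ⟨i, hiL⟩) (mem_subtype.2 hiP))

lemma incompRel_subtype_or_incompRel_subtype_of_sum_eq (hL : ∀ i ∈ L, v i ≤ t)
    (hH : ∀ i ∈ H, t < v i) {S T : Finset ι} (hS : S ⊆ L ∪ H) (hT : T ⊆ L ∪ H)
    (hcard : #S = #T) (hne : S ≠ T) (hsum : ∑ i ∈ S, v i = ∑ i ∈ T, v i) :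
    IncompRel (· ⊆ ·) (S.subtype (· ∈ L)) (T.subtype (· ∈ L)) ∨
      IncompRel (· ⊆ ·) (S.subtype (· ∈ H)) (T.subtype (· ∈ H)) := by
  have lt_of_low {P Q : Finset ι} (hP : P ⊆ L ∪ H)
      (h : P.subtype (· ∈ L) ⊆ Q.subtype (· ∈ L)) : ∀ i ∈ P \ Q, t < v i :=
    fun i hi => hH i (sdiff_subset_of_subtype_subset hP h hi)
  have le_of_high {P Q : Finset ι} (hP : P ⊆ L ∪ H)
      (h : P.subtype (· ∈ H) ⊆ Q.subtype (· ∈ H)) : ∀ i ∈ P \ Q, v i ≤ t :=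
    fun i hi => hL i (sdiff_subset_of_subtype_subset (union_comm L H ▸ hP) h hi)
  have subset_of_both {P Q : Finset ι} (hP : P ⊆ L ∪ H)
      (hlow : P.subtype (· ∈ L) ⊆ Q.subtype (· ∈ L))
      (hhigh : P.subtype (· ∈ H) ⊆ Q.subtype (· ∈ H)) : P ⊆ Q :=
    sdiff_eq_empty_iff_subset.1 <| eq_empty_of_forall_notMem fun i hi =>
      (lt_of_low hP hlow i hi).not_ge (le_of_high hP hhigh i hi)
  by_contra! hcomp
  simp only [IncompRel, not_and_or, not_not] at hcomp
  obtain ⟨hlow | hlow, hhigh | hhigh⟩ := hcomp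
  · exact hne (eq_of_subset_of_card_le (subset_of_both hS hlow hhigh) hcard.ge)
  · exact (sum_lt_sum_of_sdiff_le_of_lt_sdiff hcard.symm hne.symm (le_of_high hT hhigh)
      (lt_of_low hS hlow)).ne' hsum
  · exact (sum_lt_sum_of_sdiff_le_of_lt_sdiff hcard hne (le_of_high hS hhigh)
      (lt_of_low hT hlow)).ne hsum
  · exact hne (eq_of_subset_of_card_le (subset_of_both hT hlow hhigh) hcard.le).symm

lemma card_subtype_add_card_subtype (hLH : Disjoint L H) {T : Finset ι} (hT : T ⊆ L ∪ H) :
    #(T.subtype (· ∈ L)) + #(T.subtype (· ∈ H)) = #T := by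
  rw [card_subtype, card_subtype, filter_mem_eq_inter, filter_mem_eq_inter,
    ← card_union_of_disjoint (hLH.mono inter_subset_right inter_subset_right),
    ← inter_union_distrib_left, inter_eq_left.2 hT]

lemma choose_card_subtype_pos (L T : Finset ι) : 0 < (#L).choose #(T.subtype (· ∈ L)) :=
  Nat.choose_pos (by simpa only [Fintype.card_coe] using card_le_univ (T.subtype (· ∈ L)))

lemma card_filter_sum_eq_le_of_choose_mul_choose_le (hL : ∀ i ∈ L, v i ≤ t)
    (hH : ∀ i ∈ H, t < v i) {d : ℕ} {C : ℝ}
    (hC : ∀ a b, a + b = d → ((#L).choose a * (#H).choose b : ℝ) ≤ C) (s : M) :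
    (#{T ∈ powersetCard d (L ∪ H) | ∑ i ∈ T, v i = s} : ℝ) ≤ C := by
  have hC0 : 0 ≤ C := le_trans (by positivity) (hC 0 d (zero_add d))
  have hLH : Disjoint L H :=
    disjoint_left.2 fun i hiL hiH => (hL i hiL).not_gt (hH i hiH)
  set F := {T ∈ powersetCard d (L ∪ H) | ∑ i ∈ T, v i = s} with hF
  have hmem {T : Finset ι} (hT : T ∈ F) : (T ⊆ L ∪ H ∧ #T = d) ∧ ∑ i ∈ T, v i = s := by
    simpa only [hF, mem_filter, mem_powersetCard] using hT
  let weight (T : Finset ι) : ℕ :=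
    (#L).choose #(T.subtype (· ∈ L)) * (#H).choose #(T.subtype (· ∈ H))
  have hlym : ∑ T ∈ F, (weight T : ℚ≥0)⁻¹ ≤ 1 := by
    simpa only [weight, Nat.cast_mul, mul_inv, Fintype.card_coe] using
      sum_inv_choose_mul_inv_choose_le_one (A := fun T => T.subtype (· ∈ L))
        (B := fun T => T.subtype (· ∈ H)) fun S hS T hT hST =>
          incompRel_subtype_or_incompRel_subtype_of_sum_eq hL hH (hmem hS).1.1 (hmem hT).1.1
            ((hmem hS).1.2.trans (hmem hT).1.2.symm) hST ((hmem hS).2.trans (hmem hT).2.symm)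
  have one_le_div_weight (T : Finset ι) (hT : T ∈ F) : 1 ≤ C * (weight T : ℝ)⁻¹ := by
    have hpos : 0 < weight T :=
      Nat.mul_pos (choose_card_subtype_pos L T) (choose_card_subtype_pos H T)
    rw [← div_eq_mul_inv, one_le_div (Nat.cast_pos.2 hpos), Nat.cast_mul]
    exact hC _ _ ((card_subtype_add_card_subtype hLH (hmem hT).1.1).trans (hmem hT).1.2)
  calc (#F : ℝ) = ∑ T ∈ F, 1 := by rw [sum_const, nsmul_one]
    _ ≤ ∑ T ∈ F, C * (weight T : ℝ)⁻¹ := sum_le_sum one_le_div_weight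
    _ = C * ((∑ T ∈ F, (weight T : ℚ≥0)⁻¹ : ℚ≥0) : ℝ) := by push_cast; rw [mul_sum]
    _ ≤ C := mul_le_of_le_one_right hC0 (mod_cast hlym)

end LYM

lemma mul_half_le_sum_range_of_one_sub_mul_le {u : ℕ → ℝ} {K : ℕ} {ε : ℝ} (hu : 0 ≤ u 0)
    (hε : 0 ≤ ε) (hKε : K * ε ≤ 1 / 2) (hstep : ∀ k < K, (1 - ε) * u k ≤ u (k + 1)) :
    (K + 1) * (u 0 / 2) ≤ ∑ k ∈ range (K + 1), u k := by
  have half_le (k : ℕ) (hk : k ≤ K) : u 0 / 2 ≤ u k := by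
    rcases k.eq_zero_or_pos with rfl | hkpos
    · linarith
    have hkε : k * ε ≤ 1 / 2 := le_trans (by gcongr) hKε
    have hε1 : ε ≤ k * ε := le_mul_of_one_le_left hε (mod_cast hkpos)
    calc u 0 / 2 ≤ (1 + k * -ε) * u 0 := by nlinarith
      _ ≤ (1 + -ε) ^ k * u 0 := by
        gcongr
        exact one_add_mul_le_pow (by linarith) k
      _ ≤ u k := geom_le (by linarith) k fun i hi => hstep i (hi.trans_le hk)
  simpa using card_nsmul_le_sum (range (K + 1)) u (u 0 / 2) fun k hk =>
    half_le k (mem_range_succ_iff.1 hk)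

section Hypergeometric

/-- The number of `d`-subsets of an `(l + h)`-set that meet a fixed `h`-subset in `i` elements:
the unnormalised hypergeometric weights. The guard discards the values `i > d`, for which the
truncated `d - i` would be `0`. -/
def hypergeomCount (l h d i : ℕ) : ℕ := if i ≤ d then l.choose (d - i) * h.choose i else 0

variable {l h d j : ℕ}

lemma sum_range_hypergeomCount (l h d : ℕ) :
    ∑ i ∈ range (d + 1), hypergeomCount l h d i = (l + h).choose d := by
  rw [add_comm l h, Nat.add_choose_eq, Nat.sum_antidiagonal_eq_sum_range_succ_mk]
  refine sum_congr rfl fun i hi => ?_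
  rw [hypergeomCount, if_pos (mem_range_succ_iff.1 hi), mul_comm]

lemma hypergeomCount_pos_iff :
    0 < hypergeomCount l h d j ↔ j ≤ d ∧ j ≤ h ∧ d ≤ l + j := by
  unfold hypergeomCount
  split_ifs with hj
  · simp only [Nat.pos_iff_ne_zero, ne_eq, mul_eq_zero, not_or, Nat.choose_eq_zero_iff]
    omega
  · simp [hj]

lemma sum_hypergeomCount_le (l h d : ℕ) (s : Finset ℕ) :
    ∑ i ∈ s, hypergeomCount l h d i ≤ (l + h).choose d := by
  rw [← sum_range_hypergeomCount]
  exact sum_le_sum_of_ne_zero fun i _ hi =>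
    mem_range_succ_iff.2 (hypergeomCount_pos_iff.1 (Nat.pos_of_ne_zero hi)).1

lemma cast_choose_succ_mul (n k : ℕ) :
    (n.choose (k + 1) : ℝ) * (k + 1) = n.choose k * (n - k) := by
  rcases le_or_gt k n with hk | hk
  · rw [← Nat.cast_sub hk]
    exact_mod_cast Nat.choose_succ_right_eq n k
  · simp [Nat.choose_eq_zero_of_lt hk, Nat.choose_eq_zero_of_lt (hk.trans k.lt_succ_self)]

lemma hypergeomCount_succ_mul (l h d i : ℕ) :
    (hypergeomCount l h d (i + 1) : ℝ) * ((i + 1) * (l - d + i + 1)) =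
      hypergeomCount l h d i * ((h - i) * (d - i)) := by
  rcases lt_trichotomy i d with hi | rfl | hi
  · obtain ⟨a, rfl⟩ := Nat.exists_eq_add_of_le hi
    have hl := cast_choose_succ_mul l a
    have hh := cast_choose_succ_mul h i
    rw [hypergeomCount, hypergeomCount, if_pos (Nat.succ_le_of_lt hi), if_pos hi.le,
      show i.succ + a - (i + 1) = a by omega, show i.succ + a - i = a + 1 by omega]
    push_cast
    linear_combination (l.choose a : ℝ) * (l - a) * hh - (h.choose i : ℝ) * (h - i) * hl
  · simp [hypergeomCount]
  · simp [hypergeomCount, hi.not_ge, (hi.trans i.lt_succ_self).not_ge]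

/-- `j` is a mode of the hypergeometric weights: a maximiser of `hypergeomCount l h d`, required
to lie in the support. -/
def IsHypergeomMode (l h d j : ℕ) : Prop :=
  0 < hypergeomCount l h d j ∧ ∀ i, hypergeomCount l h d i ≤ hypergeomCount l h d j

lemma exists_isHypergeomMode (hd : d ≤ l + h) : ∃ j, IsHypergeomMode l h d j := by
  obtain ⟨j, -, hmax⟩ :=
    exists_max_image (range (d + 1)) (hypergeomCount l h d) nonempty_range_add_one
  have hsum : ∑ i ∈ range (d + 1), hypergeomCount l h d i ≠ 0 := by
    rw [sum_range_hypergeomCount]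
    exact (Nat.choose_pos hd).ne'
  obtain ⟨i, hi, hi0⟩ := exists_ne_zero_of_sum_ne_zero hsum
  refine ⟨j, (Nat.pos_of_ne_zero hi0).trans_le (hmax i hi), fun i => ?_⟩
  rcases (hypergeomCount l h d i).eq_zero_or_pos with hi | hi
  · exact hi ▸ Nat.zero_le _
  · exact hmax i (mem_range_succ_iff.2 (hypergeomCount_pos_iff.1 hi).1)

namespace IsHypergeomMode

-- The difference of the two step factors, `(i + 1) * (l - d + i + 1) - (h - i) * (d - i)`, is
-- `(i + 1) * (l + h + 2) - (h + 1) * (d + 1)`, so the mode is near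
-- `(h + 1) * (d + 1) / (l + h + 2)`.
lemma succ_mul_succ_le (hj : IsHypergeomMode l h d j) :
    ((h : ℝ) + 1) * (d + 1) ≤ (j + 1) * (l + h + 2) := by
  obtain ⟨-, -, hdl⟩ := hypergeomCount_pos_iff.1 hj.1
  have hdl' : (d : ℝ) ≤ l + j := mod_cast hdl
  have hstep : (h - j : ℝ) * (d - j) ≤ (j + 1) * (l - d + j + 1) := by
    refine le_of_mul_le_mul_left ?_ (Nat.cast_pos (α := ℝ).2 hj.1)
    rw [← hypergeomCount_succ_mul]
    have : (0 : ℝ) ≤ l - d + j + 1 := by linarith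
    gcongr
    exact hj.2 _
  linarith

lemma mul_le_succ_mul_succ (hj : IsHypergeomMode l h d j) :
    (j : ℝ) * (l + h + 2) ≤ (h + 1) * (d + 1) := by
  rcases j with _ | k
  · push_cast
    rw [zero_mul]
    positivity
  obtain ⟨hkd, hkh, -⟩ := hypergeomCount_pos_iff.1 hj.1
  have hkd' : (k : ℝ) + 1 ≤ d := mod_cast hkd
  have hkh' : (k : ℝ) + 1 ≤ h := mod_cast hkh
  have hstep : (k + 1 : ℝ) * (l - d + k + 1) ≤ (h - k) * (d - k) := by
    refine le_of_mul_le_mul_left ?_ (Nat.cast_pos (α := ℝ).2 hj.1)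
    rw [hypergeomCount_succ_mul]
    have : (0 : ℝ) ≤ (h - k) * (d - k) := mul_nonneg (by linarith) (by linarith)
    gcongr
    exact hj.2 _
  push_cast
  linarith

lemma mul_le_step_denominator (hj : IsHypergeomMode l h d j) (k : ℕ) {δ : ℝ}
    (hδ : 0 < δ) (hd : 1 ≤ d) (hdn : 2 * d ≤ l + h) (hl : δ * (l + h) ≤ l) (hh : δ * (l + h) ≤ h) :
    δ ^ 2 * d / 2 * (l + h + 2) ≤ (j + k + 1 : ℝ) * (l - d + (j + k) + 1) := by
  have hup := hj.succ_mul_succ_le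
  have hd' : (1 : ℝ) ≤ d := mod_cast hd
  have hdn' : 2 * (d : ℝ) ≤ l + h := mod_cast hdn
  have hn : (0 : ℝ) < l + h + 2 := by positivity
  have hδ2 : δ ≤ 1 / 2 := by nlinarith
  have hleft : δ * d ≤ j + 1 := by
    refine le_of_mul_le_mul_right ?_ hn
    calc δ * d * (l + h + 2) = δ * (l + h + 2) * d := by ring
      _ ≤ (h + 1) * (d + 1) := by
        gcongr
        · linarith
        · linarith
      _ ≤ _ := hup
  have hright : δ * (l + h + 2) / 2 ≤ l - d + j + 1 := by
    refine le_of_mul_le_mul_right ?_ hn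
    calc δ * (l + h + 2) / 2 * (l + h + 2) = δ * (l + h + 2) * ((l + h + 2) / 2) := by ring
      _ ≤ (l + 1) * (l + h + 1 - d) := by
        gcongr
        · linarith
        · linarith
      _ ≤ _ := by linarith
  calc δ ^ 2 * d / 2 * (l + h + 2) = δ * d * (δ * (l + h + 2) / 2) := by ring
    _ ≤ _ := by gcongr <;> linarith [k.cast_nonneg (α := ℝ)]

lemma one_sub_mul_hypergeomCount_le (hj : IsHypergeomMode l h d j) (k : ℕ) {δ : ℝ}
    (hδ : 0 < δ) (hd : 1 ≤ d) (hdn : 2 * d ≤ l + h) (hl : δ * (l + h) ≤ l) (hh : δ * (l + h) ≤ h) :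
    (1 - 2 * (k + 1) / (δ ^ 2 * d)) * hypergeomCount l h d (j + k) ≤
      hypergeomCount l h d (j + k + 1) := by
  have hlo := hj.mul_le_succ_mul_succ
  have hX := hj.mul_le_step_denominator k hδ hd hdn hl hh
  set X : ℝ := (j + k + 1) * (l - d + (j + k) + 1) with hXdef
  have hX0 : 0 < X := lt_of_lt_of_le (by positivity) hX
  have hgap : (1 - 2 * (k + 1) / (δ ^ 2 * d)) * X ≤ (h - (j + k)) * (d - (j + k)) := by
    have hdiff : X - (h - (j + k)) * (d - (j + k)) ≤ (k + 1) * (l + h + 2) := by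
      rw [hXdef]
      linarith
    have hfrac : (k + 1) * (l + h + 2) ≤ 2 * (k + 1) / (δ ^ 2 * d) * X := by
      calc (k + 1) * (l + h + 2 : ℝ)
          = 2 * (k + 1) / (δ ^ 2 * d) * (δ ^ 2 * d / 2 * (l + h + 2)) := by field_simp
        _ ≤ _ := by gcongr
    linarith only [hdiff, hfrac]
  refine le_of_mul_le_mul_right ?_ hX0
  have hratio := hypergeomCount_succ_mul l h d (j + k)
  push_cast at hratio
  rw [hratio, mul_right_comm, mul_comm]
  gcongr

end IsHypergeomMode

lemma hypergeomCount_le {δ : ℝ} (hδ : 0 < δ) (hd : 1 ≤ d) (hdn : 2 * d ≤ l + h)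
    (hl : δ * (l + h) ≤ l) (hh : δ * (l + h) ≤ h) (i : ℕ) :
    (hypergeomCount l h d i : ℝ) ≤ 4 / (δ * √d) * (l + h).choose d := by
  obtain ⟨j, hj⟩ := exists_isHypergeomMode (l := l) (h := h) (d := d) (by omega)
  -- Over `K` steps from the mode the weights lose at most half of their size.
  set K : ℕ := ⌊δ * √d / 2⌋₊
  have hK : (K : ℝ) ≤ δ * √d / 2 := Nat.floor_le (by positivity)
  have hKε : K * (2 * K / (δ ^ 2 * d)) ≤ 1 / 2 :=
    calc K * (2 * K / (δ ^ 2 * d)) = 2 * K ^ 2 / (δ ^ 2 * d) := by ring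
      _ ≤ 2 * (δ * √d / 2) ^ 2 / (δ ^ 2 * d) := by gcongr
      _ = 1 / 2 := by
        rw [div_pow, mul_pow, Real.sq_sqrt d.cast_nonneg]
        field_simp
  have hstep (k : ℕ) (hk : k < K) : (1 - 2 * K / (δ ^ 2 * d)) * hypergeomCount l h d (j + k) ≤
      hypergeomCount l h d (j + k + 1) := by
    refine le_trans ?_ (hj.one_sub_mul_hypergeomCount_le k hδ hd hdn hl hh)
    gcongr
    exact_mod_cast hk
  have hsum : (K + 1) * (hypergeomCount l h d j / 2 : ℝ) ≤ (l + h).choose d :=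
    calc (K + 1) * (hypergeomCount l h d j / 2 : ℝ)
        ≤ ∑ k ∈ range (K + 1), (hypergeomCount l h d (j + k) : ℝ) :=
          mul_half_le_sum_range_of_one_sub_mul_le (u := fun k => hypergeomCount l h d (j + k))
            (Nat.cast_nonneg _) (by positivity) hKε hstep
      _ = ((∑ i ∈ (range (K + 1)).map (addLeftEmbedding j), hypergeomCount l h d i : ℕ) : ℝ) := by
          simp
      _ ≤ (l + h).choose d := mod_cast sum_hypergeomCount_le l h d _
  calc (hypergeomCount l h d i : ℝ) ≤ hypergeomCount l h d j := mod_cast hj.2 i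
    _ = 4 / (δ * √d) * (δ * √d / 2 * (hypergeomCount l h d j / 2)) := by field_simp; norm_num
    _ ≤ 4 / (δ * √d) * ((K + 1) * (hypergeomCount l h d j / 2)) := by
      gcongr
      exact (Nat.lt_floor_add_one _).le
    _ ≤ 4 / (δ * √d) * (l + h).choose d := by gcongr

end Hypergeometric

section SliceLittlewoodOfford

variable {ι M : Type*} {v : ι → M} {E : Finset ι} {δ : ℝ}

lemma exists_threshold [LinearOrder M] (hE : E.Nonempty) (hδ : 0 < δ)
    (hlevel : ∀ a, (#{i ∈ E | v i = a} : ℝ) ≤ (1 - 2 * δ) * #E) :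
    ∃ t, δ * #E ≤ #{i ∈ E | v i ≤ t} ∧ δ * #E ≤ #{i ∈ E | t < v i} := by
  have hEpos : (0 : ℝ) < #E := Nat.cast_pos.2 hE.card_pos
  obtain ⟨top, htop, hle_top⟩ := exists_max_image E v hE
  have hδ1 : δ ≤ 1 := by nlinarith [hlevel (v top), (#{i ∈ E | v i = v top}).cast_nonneg (α := ℝ)]
  have hcandidates : {i ∈ E | δ * #E ≤ #{k ∈ E | v k ≤ v i}}.Nonempty :=
    ⟨top, mem_filter.2 ⟨htop, by
      rw [filter_true_of_mem hle_top]
      exact mul_le_of_le_one_left hEpos.le hδ1⟩⟩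
  obtain ⟨m, hm, hmin⟩ := exists_min_image _ v hcandidates
  refine ⟨v m, (mem_filter.1 hm).2, ?_⟩
  have hbelow : (#{i ∈ E | v i < v m} : ℝ) < δ * #E := by
    by_contra! hge
    have hne : {i ∈ E | v i < v m}.Nonempty :=
      card_pos.1 (Nat.cast_pos.1 ((by positivity : 0 < δ * #E).trans_le hge))
    obtain ⟨p, hp, hmax⟩ := exists_max_image _ v hne
    have hsub : {i ∈ E | v i < v m} ⊆ {i ∈ E | v i ≤ v p} := fun i hi =>
      mem_filter.2 ⟨(mem_filter.1 hi).1, hmax i hi⟩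
    have hpm := hmin p (mem_filter.2 ⟨(mem_filter.1 hp).1,
      hge.trans (Nat.cast_le.2 (card_le_card hsub))⟩)
    exact hpm.not_gt (mem_filter.1 hp).2
  have hcover : E ⊆ {i ∈ E | v i < v m} ∪ {i ∈ E | v i = v m} ∪ {i ∈ E | v m < v i} := by
    intro i hi
    simpa [hi, or_assoc] using lt_trichotomy (v i) (v m)
  have hcard : (#E : ℝ) ≤ #{i ∈ E | v i < v m} + #{i ∈ E | v i = v m} + #{i ∈ E | v m < v i} :=
    mod_cast (card_le_card hcover).trans
      ((card_union_le _ _).trans (Nat.add_le_add_right (card_union_le _ _) _))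
  linarith [hlevel (v m)]

theorem card_filter_sum_eq_le [AddCommMonoid M] [LinearOrder M] [IsOrderedCancelAddMonoid M]
    (hδ : 0 < δ) (hlevel : ∀ a, (#{i ∈ E | v i = a} : ℝ) ≤ (1 - 2 * δ) * #E) {d : ℕ}
    (hd : 1 ≤ d) (hdE : 2 * d ≤ #E) (s : M) :
    (#{T ∈ powersetCard d E | ∑ i ∈ T, v i = s} : ℝ) ≤ 4 / (δ * √d) * #(powersetCard d E) := by
  obtain ⟨t, hL, hH⟩ := exists_threshold (card_pos.1 (by omega)) hδ hlevel
  set L := {i ∈ E | v i ≤ t}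
  set H := {i ∈ E | t < v i}
  have hLH : L ∪ H = E := by simpa only [not_le] using filter_union_filter_not_eq (v · ≤ t) E
  have hcard : #L + #H = #E := by
    simpa only [not_le] using card_filter_add_card_filter_not (s := E) (v · ≤ t)
  have hcardR : (#L + #H : ℝ) = #E := mod_cast hcard
  have hchoose (a b : ℕ) (hab : a + b = d) :
      ((#L).choose a * (#H).choose b : ℝ) ≤ 4 / (δ * √d) * (#E).choose d := by
    have hcount : hypergeomCount #L #H d b = (#L).choose a * (#H).choose b := by
      rw [← hab, hypergeomCount, if_pos (Nat.le_add_left b a), Nat.add_sub_cancel]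
    rw [← Nat.cast_mul, ← hcount, ← hcard]
    exact hypergeomCount_le hδ hd (hcard ▸ hdE) (hcardR ▸ hL) (hcardR ▸ hH) b
  simpa only [hLH, card_powersetCard] using
    card_filter_sum_eq_le_of_choose_mul_choose_le (L := L) (H := H)
      (fun i hi => (mem_filter.1 hi).2) (fun i hi => (mem_filter.1 hi).2) hchoose s

end SliceLittlewoodOfford

lemma IsBalancedVec.card_filter_eq_le {η : ℝ} (hη : 0 < η) {n : ℕ} {v : Fin n → ℝ}
    (hv : IsBalancedVec η v) {E : Finset (Fin n)} (hE : E.Nonempty)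
    (hEn : (n : ℝ) * (1 - η / 3) ≤ #E) (a : ℝ) :
    (#{i ∈ E | v i = a} : ℝ) ≤ (1 - 2 * (η / 3)) * #E := by
  have hlevel : #{i ∈ E | v i = a} ≤ {i | v i = a}.ncard := by
    rw [← Set.ncard_coe_finset]
    exact Set.ncard_le_ncard fun i hi => (mem_filter.1 hi).2
  have hn : (0 : ℝ) < n := Nat.cast_pos.2 (hE.elim fun i _ => i.pos)
  have hη1 : η ≤ 1 := by nlinarith [hv a, ({i | v i = a}.ncard).cast_nonneg (α := ℝ)]
  calc (#{i ∈ E | v i = a} : ℝ) ≤ {i | v i = a}.ncard := mod_cast hlevel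
    _ ≤ (1 - η) * n := hv a
    _ ≤ (1 - 2 * (η / 3)) * (n * (1 - η / 3)) := by nlinarith [mul_pos (mul_pos hη hη) hn]
    _ ≤ (1 - 2 * (η / 3)) * #E := by
      gcongr
      linarith

theorem corank_boosting_bipartite_general {η : ℝ} (hη : 0 < η) {n₁ n₂ : ℕ}
    {B : Matrix (Fin n₁) (Fin n₂) ℝ} {E : Finset (Fin n₁)} {d : ℕ} (z : Fin n₁ → ℝ)
    (hE : (n₁ : ℝ) * (1 - η / 3) ≤ #E) (hd : 1 ≤ d) (hdE : 2 * d ≤ #E)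
    {v : Fin n₁ → ℝ} (hker : B.transpose.mulVec v = 0) (hv : IsBalancedVec η v) :
    (1 - 12 / η / √d) * #(powersetCard d E) ≤
      #{T ∈ powersetCard d E | B.rank + 1 ≤ (appendCol B (xVec E T z)).rank} := by
  set s : ℝ := -∑ i ∈ Eᶜ, v i * z i
  have hbad : (#{T ∈ powersetCard d E | ∑ i ∈ T, v i = s} : ℝ) ≤
      12 / η / √d * #(powersetCard d E) := by
    convert card_filter_sum_eq_le (by positivity)
      (hv.card_filter_eq_le hη (card_pos.1 (by omega)) hE) hd hdE s using 2
    field_simp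
    norm_num
  have hgood : #{T ∈ powersetCard d E | ¬∑ i ∈ T, v i = s} ≤
      #{T ∈ powersetCard d E | B.rank + 1 ≤ (appendCol B (xVec E T z)).rank} := by
    refine card_le_card fun T hT => ?_
    obtain ⟨hT, hTs⟩ := mem_filter.1 hT
    exact mem_filter.2 ⟨hT, rank_lt_rank_appendCol_xVec (mem_powersetCard.1 hT).1
      (Matrix.mulVec_transpose B v ▸ hker) hTs⟩
  have hsplit : (#{T ∈ powersetCard d E | ∑ i ∈ T, v i = s} : ℝ) +
      #{T ∈ powersetCard d E | ¬∑ i ∈ T, v i = s} = #(powersetCard d E) :=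
    mod_cast card_filter_add_card_filter_not _
  linarith [Nat.cast_le (α := ℝ).2 hgood]

/-- Appending a random sparse 0/1 column to a matrix whose transpose has an
`η`-balanced kernel vector increases the rank, with probability `1 − O_η(1/√d)`. -/
theorem corank_boosting_bipartite (η : ℝ) (hη₁ : 0 < η) (hη₂ : η < 1 / 2) :
    ∃ C : ℝ, 0 < C ∧
      ∀ (n₁ n₂ : ℕ) (B : Matrix (Fin n₁) (Fin n₂) ℝ) (E : Finset (Fin n₁)) (d : ℕ)
        (z : Fin n₁ → ℝ),
        (n₁ : ℝ) * (1 - η / 3) ≤ (E.card : ℝ) →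
        1 ≤ d → 2 * d ≤ E.card →
        (∀ i ∉ E, z i = 0 ∨ z i = 1) →
        (∃ v : Fin n₁ → ℝ, B.transpose.mulVec v = 0 ∧ IsBalancedVec η v) →
        (1 - C / Real.sqrt d) * ((Finset.powersetCard d E).card : ℝ) ≤
          (((Finset.powersetCard d E).filter fun T =>
            B.rank + 1 ≤ (appendCol B (xVec E T z)).rank).card : ℝ) := by
  exact ⟨12 / η, by positivity, fun _ _ _ _ _ z hE hd hdE _ ⟨_, hker, hv⟩ =>
    corank_boosting_bipartite_general hη₁ z hE hd hdE hker hv⟩
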